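/- arXiv:math/0509548 — 2 statements merged into one kernel-verified Lean document; each statement's English description precedes it below -/
import Mathlib

section
/- Let K be a commutative ring, Ω a set, and M a symétral mould on Ω. Then M is invertible for mould multiplication and its multiplicative inverse N is given by N^∅ = 1 and N^{(ω_1,…,ω_r)} = (−1)^r M^{(ω_r,…,ω_1)} for every word (ω_1,…,ω_r), i.e., the inverse is obtained by reversing the word and multiplying by (−1)^{length}. -/
namespace Moulds

variable {X : Type*} {K : Type*}

/-- The multiset of shuffles (interleavings) of two words, counted with multiplicity. -/
def shuffles : List X → List X → Multiset (List X)
  | [], v => {v}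
  | a :: u, [] => {a :: u}
  | a :: u, b :: v =>
      (shuffles u (b :: v)).map (a :: ·) + (shuffles (a :: u) v).map (b :: ·)
termination_by u v => u.length + v.length

/-- The multiset of contracting shuffles of two words: interleavings in which any
pair of adjacent letters coming one from each word may be contracted to their sum. -/
def cshuffles [Add X] : List X → List X → Multiset (List X)
  | [], v => {v}
  | a :: u, [] => {a :: u}
  | a :: u, b :: v =>
      (cshuffles u (b :: v)).map (a :: ·) + (cshuffles (a :: u) v).map (b :: ·)
        + (cshuffles u v).map ((a + b) :: ·)
termination_by u v => u.length + v.length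

/-- Shuffle sum Σ_{w ∈ sh(u,v)} M^w (with multiplicity). -/
def shuffleSum [AddCommMonoid K] (M : List X → K) (u v : List X) : K :=
  ((shuffles u v).map M).sum

/-- Contracting shuffle sum Σ_{w ∈ csh(u,v)} M^w (with multiplicity). -/
def cshuffleSum [Add X] [AddCommMonoid K] (M : List X → K) (u v : List X) : K :=
  ((cshuffles u v).map M).sum

/-- A mould is alternal if it vanishes on ∅ and all its nontrivial shuffle sums vanish. -/
def Alternal [AddCommMonoid K] (M : List X → K) : Prop :=
  M [] = 0 ∧ ∀ u v : List X, u ≠ [] → v ≠ [] → shuffleSum M u v = 0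

/-- A mould is symétral if M^∅ = 1 and shuffle sums multiply. -/
def Symetral [CommRing K] (M : List X → K) : Prop :=
  M [] = 1 ∧ ∀ u v : List X, shuffleSum M u v = M u * M v

/-- A mould is alternel if it vanishes on ∅ and all its nontrivial contracting
shuffle sums vanish. -/
def Alternel [Add X] [AddCommMonoid K] (M : List X → K) : Prop :=
  M [] = 0 ∧ ∀ u v : List X, u ≠ [] → v ≠ [] → cshuffleSum M u v = 0

/-- A mould is symétrel if M^∅ = 1 and contracting shuffle sums multiply. -/
def Symetrel [Add X] [CommRing K] (M : List X → K) : Prop :=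
  M [] = 1 ∧ ∀ u v : List X, cshuffleSum M u v = M u * M v

/-- Mould multiplication: (M × N)^w = Σ_{w = w¹w²} M^{w¹} N^{w²}. -/
def mmul [CommRing K] (M N : List X → K) : List X → K :=
  fun w => ∑ i ∈ Finset.range (w.length + 1), M (w.take i) * N (w.drop i)

/-- The unit mould 1^•, equal to 1 on the empty word and 0 elsewhere. -/
def mone [One K] [Zero K] : List X → K :=
  fun w => match w with | [] => 1 | _ => 0

/-- The mould I^•, equal to 1 on one-letter words and 0 elsewhere. -/
def mId [One K] [Zero K] : List X → K :=
  fun w => if w.length = 1 then 1 else 0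

/-- All factorizations of a word into nonempty consecutive blocks; a block is
recorded as (first letter, rest of the block). -/
def splits : List X → List (List (X × List X))
  | [] => [[]]
  | a :: t =>
      (splits t).flatMap fun p =>
        match p with
        | [] => [[(a, ([] : List X))]]
        | (b, r) :: ps => [(a, b :: r) :: ps, (a, ([] : List X)) :: (b, r) :: ps]

/-- The sum ‖·‖ of the letters of a (nonempty) block. -/
def blockSum [Add X] (b : X × List X) : X := b.2.foldl (· + ·) b.1

/-- Mould composition:
(M ∘ N)^w = Σ_{w = w¹⋯wˢ, wⁱ ≠ ∅} M^{(‖w¹‖,…,‖wˢ‖)} N^{w¹} ⋯ N^{wˢ}. -/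
def mcomp [Add X] [CommRing K] (M N : List X → K) : List X → K :=
  fun w => ((splits w).map
    (fun p => M (p.map blockSum) * (p.map (fun b => N (b.1 :: b.2))).prod)).sum

/-- The monomial series associated to a word. -/
def mono [DecidableEq X] [One K] [Zero K] (w : List X) : List X → K :=
  fun w' => if w' = w then 1 else 0

end Moulds

namespace Moulds

/- STATEMENT 14: Over a commutative ring K, a symétral mould M is invertible for
mould multiplication, with two-sided inverse N given by N^∅ = 1 and
N^{(ω₁,…,ω_r)} = (−1)^r M^{(ω_r,…,ω₁)} (word reversal with sign (−1)^{length}). -/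

variable {Ω : Type*} {K : Type*} [CommRing K]

/-!
In the shuffle sum `∑ M^x` over `x ∈ sh(rev(w₁⋯wᵢ), wᵢ₊₁⋯wᵣ)`, the first letter of `x` is either
`wᵢ` or `wᵢ₊₁`. The shuffles beginning with `wᵢ₊₁` are exactly those beginning with the first
letter of the left word at index `i + 1`, so the alternating sum over `i` telescopes to zero when
`r > 0`. Since `M` is symétral, this says that the signed reversal of `M` is a left inverse of
`M`. Reversal of words reverses mould products and preserves symétrality, and so exchanges left
and right inverses.
-/

theorem shuffles_nil_left (v : List Ω) : shuffles [] v = {v} := by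
  rw [shuffles]

theorem shuffles_nil_right (u : List Ω) : shuffles u [] = {u} := by
  cases u <;> rw [shuffles]

theorem shuffles_cons_cons (a b : Ω) (u v : List Ω) :
    shuffles (a :: u) (b :: v) =
      (shuffles u (b :: v)).map (a :: ·) + (shuffles (a :: u) v).map (b :: ·) := by
  rw [shuffles]

theorem shuffles_comm (u v : List Ω) : shuffles u v = shuffles v u := by
  fun_induction shuffles u v with
  | case1 v => rw [shuffles_nil_right]
  | case2 a u => rw [shuffles_nil_left]
  | case3 a u b v ihu ihv => rw [shuffles_cons_cons b a, ihu, ihv, add_comm]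

theorem shuffles_singleton_append_singleton (a b : Ω) (v : List Ω) :
    shuffles [a] (v ++ [b]) = (v ++ [b, a]) ::ₘ (shuffles [a] v).map (· ++ [b]) := by
  induction v with
  | nil =>
    simp [shuffles_cons_cons, shuffles_nil_left, shuffles_nil_right, Multiset.cons_swap,
      ← Multiset.cons_zero]
  | cons d v ih =>
    simp [shuffles_cons_cons, shuffles_nil_left, ih, Multiset.map_map, Multiset.cons_swap]

theorem shuffles_append_singleton (a b : Ω) (u v : List Ω) :
    shuffles (u ++ [a]) (v ++ [b]) =
      (shuffles u (v ++ [b])).map (· ++ [a]) + (shuffles (u ++ [a]) v).map (· ++ [b]) := by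
  fun_induction shuffles u v with
  | case1 v => simp [shuffles_nil_left, shuffles_singleton_append_singleton]
  | case2 c u =>
    rw [shuffles_comm, List.nil_append, shuffles_singleton_append_singleton, shuffles_nil_right,
      shuffles_comm (c :: u), ← Multiset.singleton_add, add_comm]
    simp
  | case3 c u d v ihu ihv =>
    simp only [List.cons_append] at ihu ihv
    simp only [List.cons_append, shuffles_cons_cons, ihu, ihv, Multiset.map_add, Multiset.map_map,
      Function.comp_def]
    abel

theorem shuffles_reverse (u v : List Ω) :
    shuffles u.reverse v.reverse = (shuffles u v).map List.reverse := by
  fun_induction shuffles u v with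
  | case1 v => simp [shuffles_nil_left]
  | case2 a u => simp [shuffles_nil_right]
  | case3 a u b v ihu ihv =>
    simp only [List.reverse_cons] at ihu ihv
    simp [shuffles_append_singleton, ihu, ihv, Multiset.map_map]

section ShuffleSum

variable {A : Type*} [AddCommMonoid A] (f : List Ω → A)

theorem shuffleSum_nil_left (v : List Ω) : shuffleSum f [] v = f v := by
  simp [shuffleSum, shuffles_nil_left]

theorem shuffleSum_nil_right (u : List Ω) : shuffleSum f u [] = f u := by
  simp [shuffleSum, shuffles_nil_right]

theorem shuffleSum_cons_cons (a b : Ω) (u v : List Ω) :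
    shuffleSum f (a :: u) (b :: v) =
      shuffleSum (fun w => f (a :: w)) u (b :: v) +
        shuffleSum (fun w => f (b :: w)) (a :: u) v := by
  simp [shuffleSum, shuffles_cons_cons, Multiset.map_map]

theorem shuffleSum_comp_reverse (u v : List Ω) :
    shuffleSum (f ∘ List.reverse) u v = shuffleSum f u.reverse v.reverse := by
  simp only [shuffleSum, shuffles_reverse, Multiset.map_map]

end ShuffleSum

section AlternatingSum

variable {A : Type*} [AddCommGroup A]

theorem alternating_sum_take_drop_cons (g : List Ω → List Ω → A) (b : Ω) (v : List Ω) :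
    ∑ i ∈ Finset.range ((b :: v).length + 1),
        (-1 : ℤ) ^ i • g ((b :: v).take i) ((b :: v).drop i) =
      g [] (b :: v) -
        ∑ i ∈ Finset.range (v.length + 1), (-1 : ℤ) ^ i • g (b :: v.take i) (v.drop i) := by
  rw [List.length_cons, Finset.sum_range_succ']
  simp [pow_succ, sub_eq_neg_add]

theorem alternating_sum_shuffleSum_reverse_take_append_cons (f : List Ω → A) (a : Ω)
    (u v : List Ω) :
    ∑ i ∈ Finset.range (v.length + 1),
        (-1 : ℤ) ^ i • shuffleSum f ((v.take i).reverse ++ a :: u) (v.drop i) =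
      shuffleSum (fun w => f (a :: w)) u v := by
  induction v generalizing a u with
  | nil => simp [shuffleSum_nil_right]
  | cons b v ih =>
    rw [alternating_sum_take_drop_cons fun x y => shuffleSum f (x.reverse ++ a :: u) y]
    simp only [List.reverse_nil, List.nil_append, List.reverse_cons, List.append_assoc,
      List.singleton_append]
    rw [ih, shuffleSum_cons_cons, add_sub_cancel_right]

theorem alternating_sum_shuffleSum_reverse_take (f : List Ω → A) {w : List Ω} (hw : w ≠ []) :
    ∑ i ∈ Finset.range (w.length + 1),
      (-1 : ℤ) ^ i • shuffleSum f (w.take i).reverse (w.drop i) = 0 := by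
  obtain ⟨b, v, rfl⟩ := List.exists_cons_of_ne_nil hw
  rw [alternating_sum_take_drop_cons fun x y => shuffleSum f x.reverse y]
  simp only [List.reverse_nil, List.reverse_cons]
  rw [alternating_sum_shuffleSum_reverse_take_append_cons, shuffleSum_nil_left,
    shuffleSum_nil_left, sub_self]

end AlternatingSum

/-- The signed reversal `w ↦ (-1) ^ |w| * M^{rev w}` of a mould `M`: the candidate for the
multiplicative inverse of a symétral mould. -/
def signedReversal {R : Type*} [Ring R] (M : List Ω → R) : List Ω → R :=
  fun w => (-1) ^ w.length * M w.reverse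

theorem signedReversal_comp_reverse {R : Type*} [Ring R] (M : List Ω → R) :
    signedReversal M ∘ List.reverse = signedReversal (M ∘ List.reverse) := by
  funext w
  simp [signedReversal]

theorem mone_comp_reverse {R : Type*} [Zero R] [One R] :
    (mone : List Ω → R) ∘ List.reverse = mone := by
  funext w
  cases w using List.reverseRecOn <;> simp [mone]

theorem mmul_comp_reverse (M N : List Ω → K) :
    mmul M N ∘ List.reverse = mmul (N ∘ List.reverse) (M ∘ List.reverse) := by
  funext w
  simp only [mmul, Function.comp_apply, List.length_reverse]
  rw [← Finset.sum_range_reflect]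
  refine Finset.sum_congr rfl fun i hi => ?_
  have hi : i ≤ w.length := Nat.lt_succ_iff.mp (Finset.mem_range.mp hi)
  rw [mul_comm, Nat.add_sub_cancel, List.take_reverse, List.drop_reverse, Nat.sub_sub_self hi]

theorem Symetral.comp_reverse {M : List Ω → K} (hM : Symetral M) :
    Symetral (M ∘ List.reverse) := by
  refine ⟨hM.1, fun u v => ?_⟩
  rw [shuffleSum_comp_reverse, hM.2, Function.comp_apply, Function.comp_apply]

theorem Symetral.signedReversal_mmul {M : List Ω → K} (hM : Symetral M) :
    mmul (signedReversal M) M = mone := by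
  funext w
  rcases eq_or_ne w [] with rfl | hw
  · simp [mmul, signedReversal, mone, hM.1]
  calc mmul (signedReversal M) M w
      = ∑ i ∈ Finset.range (w.length + 1),
          (-1 : ℤ) ^ i • shuffleSum M (w.take i).reverse (w.drop i) := by
        refine Finset.sum_congr rfl fun i hi => ?_
        have hi : i ≤ w.length := Nat.lt_succ_iff.mp (Finset.mem_range.mp hi)
        simp [signedReversal, hM.2, hi, mul_assoc]
    _ = 0 := alternating_sum_shuffleSum_reverse_take M hw
    _ = mone w := by simp [mone]

theorem Symetral.mmul_signedReversal {M : List Ω → K} (hM : Symetral M) :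
    mmul M (signedReversal M) = mone := by
  refine List.reverse_surjective.injective_comp_right ?_
  simp only [mmul_comp_reverse, signedReversal_comp_reverse, mone_comp_reverse,
    hM.comp_reverse.signedReversal_mmul]

theorem symetral_inverse_eq_signed_reversal (M : List Ω → K) (hM : Symetral M) :
    mmul M (fun w => (-1) ^ w.length * M w.reverse) = mone ∧
    mmul (fun w => (-1) ^ w.length * M w.reverse) M = mone ∧
    ((-1 : K) ^ ([] : List Ω).length * M ([] : List Ω).reverse = 1) :=
  ⟨hM.mmul_signedReversal, hM.signedReversal_mmul, by simp [hM.1]⟩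

end Moulds
end

section
/- Let K be a field, Ω a commutative semigroup, and g : Ω → K a semigroup homomorphism into (K, ·), i.e., g(α+β) = g(α)g(β); set f(∅) = 1 and f(w) = g(ω_1)⋯g(ω_r) for w = (ω_1,…,ω_r), and assume f(w) ≠ 1 for every nonempty word w. If a mould M on Ω satisfies M^∅ = 1 and f(w) · M^w = M^w + M^{(ω_2,…,ω_r)} for every nonempty word w = (ω_1,…,ω_r) (equivalently, A_f(M) = (1^• + I^•) × M, where (A_f M)^w = f(w) M^w), then M is symétrel. -/
namespace Moulds

/- STATEMENT 18: Over a field K and a commutative semigroup Ω, let g : Ω → K be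
multiplicative (g(α+β) = g(α)g(β)), f(w) = g(ω₁)⋯g(ω_r) (f(∅) = 1), and suppose
f(w) ≠ 1 for every nonempty word w.  If M^∅ = 1 and
f(w)·M^w = M^w + M^{(ω₂,…,ω_r)} for every nonempty word w (i.e.
A_f(M) = (1^• + I^•) × M), then M is symétrel. -/

variable {Ω : Type*} [AddCommSemigroup Ω] {K : Type*} [Field K]

/-! Multiplicativity of `g` makes `f` constant on the contracting shuffles of `u` and `v`, with
value `f(u) f(v)`. Summing the mould equation over these shuffles, and writing `u'`, `v'` for the
tails, the contracting shuffle sums `F` of `M` satisfy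
`f(u) f(v) F(u, v) = F(u, v) + F(u', v) + F(u, v') + F(u', v')`.
The products `M^u M^v` satisfy the same recursion, because
`f(u) M^u f(v) M^v = (M^u + M^{u'}) (M^v + M^{v'})`.
As `f(u) f(v) - 1` can be cancelled, the two families agree. -/

section Cshuffles

variable {X : Type*} [Add X]

theorem cshuffles_nil_left (v : List X) : cshuffles [] v = {v} := by
  rw [cshuffles]

theorem cshuffles_nil_right (u : List X) : cshuffles u [] = {u} := by
  cases u <;> rw [cshuffles]

theorem cshuffles_cons_cons (a b : X) (u v : List X) :
    cshuffles (a :: u) (b :: v) =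
      (cshuffles u (b :: v)).map (a :: ·) + (cshuffles (a :: u) v).map (b :: ·)
        + (cshuffles u v).map ((a + b) :: ·) := by
  rw [cshuffles]

theorem ne_nil_of_mem_cshuffles_cons_cons {a b : X} {u v w : List X}
    (hw : w ∈ cshuffles (a :: u) (b :: v)) : w ≠ [] := by
  simp only [cshuffles_cons_cons, Multiset.mem_add, Multiset.mem_map] at hw
  rcases hw with (⟨_, _, rfl⟩ | ⟨_, _, rfl⟩) | ⟨_, _, rfl⟩ <;> exact List.cons_ne_nil _ _

theorem prod_map_of_mem_cshuffles {S : Type*} [CommMonoid S] {g : X → S}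
    (hg : ∀ a b, g (a + b) = g a * g b) {u v w : List X} (hw : w ∈ cshuffles u v) :
    (w.map g).prod = (u.map g).prod * (v.map g).prod := by
  fun_induction cshuffles u v generalizing w with
  | case1 v => simp_all
  | case2 a u => simp_all
  | case3 a u b v ih_left ih_right ih_contract =>
    simp only [Multiset.mem_add, Multiset.mem_map] at hw
    rcases hw with (⟨w, hw, rfl⟩ | ⟨w, hw, rfl⟩) | ⟨w, hw, rfl⟩ <;>
      simp only [List.map_cons, List.prod_cons]
    · rw [ih_left hw, List.map_cons, List.prod_cons, mul_assoc]
    · rw [ih_right hw, List.map_cons, List.prod_cons, mul_left_comm]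
    · rw [ih_contract hw, hg, mul_mul_mul_comm]

end Cshuffles

section CshuffleSum

variable {X A : Type*} [Add X] [AddCommMonoid A]

theorem cshuffleSum_nil_left (M : List X → A) (v : List X) : cshuffleSum M [] v = M v := by
  simp [cshuffleSum, cshuffles_nil_left]

theorem cshuffleSum_nil_right (M : List X → A) (u : List X) : cshuffleSum M u [] = M u := by
  simp [cshuffleSum, cshuffles_nil_right]

theorem cshuffleSum_congr {M N : List X → A} {u v : List X}
    (h : ∀ w ∈ cshuffles u v, M w = N w) : cshuffleSum M u v = cshuffleSum N u v :=
  congrArg Multiset.sum (Multiset.map_congr rfl h)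

theorem cshuffleSum_add (M N : List X → A) (u v : List X) :
    cshuffleSum (fun w => M w + N w) u v = cshuffleSum M u v + cshuffleSum N u v :=
  Multiset.sum_map_add

theorem cshuffleSum_tail_cons_cons (M : List X → A) (a b : X) (u v : List X) :
    cshuffleSum (fun w => M w.tail) (a :: u) (b :: v) =
      cshuffleSum M u (b :: v) + cshuffleSum M (a :: u) v + cshuffleSum M u v := by
  simp [cshuffleSum, cshuffles_cons_cons, Function.comp_def]

end CshuffleSum

section AutomorphismEquation

variable {X R : Type*} [Add X] {g : X → R} {M : List X → R}

theorem cshuffleSum_prod_mul [CommSemiring R] (hg : ∀ a b, g (a + b) = g a * g b)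
    (M : List X → R) (u v : List X) :
    cshuffleSum (fun w => (w.map g).prod * M w) u v =
      (u.map g).prod * (v.map g).prod * cshuffleSum M u v := by
  rw [cshuffleSum_congr fun w hw => by rw [prod_map_of_mem_cshuffles hg hw]]
  exact Multiset.sum_map_mul_left

theorem prod_mul_cshuffleSum_cons_cons [CommSemiring R] (hg : ∀ a b, g (a + b) = g a * g b)
    (heq : ∀ w, w ≠ [] → (w.map g).prod * M w = M w + M w.tail) (a b : X) (u v : List X) :
    ((a :: u).map g).prod * ((b :: v).map g).prod * cshuffleSum M (a :: u) (b :: v) =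
      cshuffleSum M (a :: u) (b :: v) +
        (cshuffleSum M u (b :: v) + cshuffleSum M (a :: u) v + cshuffleSum M u v) := by
  rw [← cshuffleSum_prod_mul hg,
    cshuffleSum_congr fun w hw => heq w (ne_nil_of_mem_cshuffles_cons_cons hw),
    cshuffleSum_add, cshuffleSum_tail_cons_cons]

theorem symetrel_of_automorphism_equation_general [CommRing R]
    (hg : ∀ a b, g (a + b) = g a * g b)
    (hreg : ∀ w : List X, w ≠ [] → IsRegular ((w.map g).prod - 1))
    (hM0 : M [] = 1)
    (heq : ∀ w, w ≠ [] → (w.map g).prod * M w = M w + M w.tail) :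
    Symetrel M := by
  refine ⟨hM0, fun u v => ?_⟩
  fun_induction cshuffles u v with
  | case1 v => rw [cshuffleSum_nil_left, hM0, one_mul]
  | case2 a u => rw [cshuffleSum_nil_right, hM0, mul_one]
  | case3 a u b v ih_left ih_right ih_contract =>
    have hsum := prod_mul_cshuffleSum_cons_cons hg heq a b u v
    rw [ih_left, ih_right, ih_contract] at hsum
    have hu : ((a :: u).map g).prod * M (a :: u) = M (a :: u) + M u :=
      heq _ (List.cons_ne_nil a u)
    have hv : ((b :: v).map g).prod * M (b :: v) = M (b :: v) + M v :=
      heq _ (List.cons_ne_nil b v)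
    have hcancel := hreg (a :: u ++ b :: v) (List.cons_ne_nil a _)
    rw [List.map_append, List.prod_append] at hcancel
    apply hcancel.left
    linear_combination hsum - ((b :: v).map g).prod * M (b :: v) * hu
      - (M (a :: u) + M u) * hv

end AutomorphismEquation

theorem symetrel_of_automorphism_equation
    (g : Ω → K) (hg : ∀ a b : Ω, g (a + b) = g a * g b)
    (hne : ∀ w : List Ω, w ≠ [] → (w.map g).prod ≠ 1)
    (M : List Ω → K) (hM0 : M [] = 1)
    (heq : ∀ w : List Ω, w ≠ [] → (w.map g).prod * M w = M w + M w.tail) :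
    Symetrel M :=
  symetrel_of_automorphism_equation_general hg
    (fun w hw => IsRegular.of_ne_zero (sub_ne_zero.mpr (hne w hw))) hM0 heq

end Moulds
end
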